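/- Let d ≥ 1 and consider the nonlinear ICA setting with matched intervention targets. Let the first model be given by strictly positive C¹ densities (p_i)_{i∈[d]} on ℝ and intervened densities (p̃_k)_{k∈[d−1]} with interventional joints p^k(z) = p̃_k(z_k)∏_{i≠k}p_i(z_i), and let the second model be given by (q_i)_{i∈[d]} and, for some permutation σ of [d], intervened densities (q̃_{σ(k)})_{k∈[d−1]} with joints q^k(z) = q̃_{σ(k)}(z_{σ(k)})∏_{i≠σ(k)}q_i(z_i). Assume the general interventional discrepancy: for every k ∈ [d−1] and every i ∈ [d], (log p_i)′(z_i) ≠ (log p̃_k)′(z_k) for Lebesgue-a.e. z ∈ ℝ^d, and likewise (log q_i)′(z_i) ≠ (log q̃_{σ(k)})′(z_{σ(k)}) a.e. If f, f′ : ℝ^d → ℝ^d are C¹ diffeomorphisms with f_*P^k = f′_*Q^k for all k ∈ {0,…,d−1}, then f′⁻¹∘f ∈ S_reparam. -/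

import Mathlib

open MeasureTheory

noncomputable section

/-- `f` depends only on the coordinates in `S`. -/
def DependsOnlyOn {d : ℕ} {α : Type*} (f : (Fin d → ℝ) → α) (S : Finset (Fin d)) : Prop :=
  ∀ z w : Fin d → ℝ, (∀ i ∈ S, z i = w i) → f z = f w

/-- `f` is a C¹ diffeomorphism between (real) normed spaces. -/
def IsC1Diffeo {E F : Type*} [NormedAddCommGroup E] [NormedSpace ℝ E]
    [NormedAddCommGroup F] [NormedSpace ℝ F] (f : E → F) : Prop :=
  ContDiff ℝ 1 f ∧ ∃ g : F → E, ContDiff ℝ 1 g ∧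
    Function.LeftInverse g f ∧ Function.RightInverse g f

/-- The measure on `ℝ^d` with density `ρ` with respect to Lebesgue measure. -/
def densityMeasure {d : ℕ} (ρ : (Fin d → ℝ) → ℝ) : Measure (Fin d → ℝ) :=
  volume.withDensity fun z => ENNReal.ofReal (ρ z)

/-- The measure on `ℝ` with density `r` with respect to Lebesgue measure. -/
def densityMeasure₁ (r : ℝ → ℝ) : Measure ℝ :=
  volume.withDensity fun x => ENNReal.ofReal (r x)

/-- Membership in `S_scaling`: the map acts by an elementwise C¹ diffeomorphism of `ℝ`
on each coordinate. -/
def InSScaling {d : ℕ} (h : (Fin d → ℝ) → (Fin d → ℝ)) : Prop :=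
  ∃ hs : Fin d → ℝ → ℝ, (∀ i, IsC1Diffeo (hs i)) ∧ ∀ (z : Fin d → ℝ) (i : Fin d), h z i = hs i (z i)

/-- Membership in `S_reparam`: a coordinate permutation composed with an element of
`S_scaling`. -/
def InSReparam {d : ℕ} (g : (Fin d → ℝ) → (Fin d → ℝ)) : Prop :=
  ∃ (σ : Equiv.Perm (Fin d)) (hs : Fin d → ℝ → ℝ),
    (∀ i, IsC1Diffeo (hs i)) ∧ ∀ (z : Fin d → ℝ) (i : Fin d), g z i = hs (σ i) (z (σ i))

/-- A C¹ conditional-density family for the DAG on `Fin d` with parent map `pa`: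
each `p i` is strictly positive, C¹, depends only on the coordinates `{i} ∪ pa i`,
and integrates to `1` in the `i`-th coordinate. -/
def IsCondFamily {d : ℕ} (pa : Fin d → Finset (Fin d))
    (p : Fin d → (Fin d → ℝ) → ℝ) : Prop :=
  ∀ i, (∀ z, 0 < p i z) ∧ ContDiff ℝ 1 (p i) ∧
    DependsOnlyOn (p i) (insert i (pa i)) ∧
    ∀ z, (∫ t : ℝ, p i (Function.update z i t)) = 1

/-- A strictly positive C¹ probability density on `ℝ`. -/
def IsC1Density (r : ℝ → ℝ) : Prop :=
  (∀ x, 0 < r x) ∧ ContDiff ℝ 1 r ∧ (∫ x : ℝ, r x) = 1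

/-- The joint density `z ↦ ∏ i, p i z` of a conditional-density family. -/
def jointDensity {d : ℕ} (p : Fin d → (Fin d → ℝ) → ℝ) : (Fin d → ℝ) → ℝ :=
  fun z => ∏ i, p i z

/-- `j` is an ancestor of `i` in the DAG with parent map `pa` (transitive closure of the
parent relation). -/
def IsAnc {d : ℕ} (pa : Fin d → Finset (Fin d)) (j i : Fin d) : Prop :=
  Relation.TransGen (fun a b => a ∈ pa b) j i

/-!
Put `φ = f'⁻¹ ∘ f`, which carries `P⁰` to `Q⁰` and every `Pᵏ` to `Qᵏ`. Comparing continuous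
densities of the regimes `k` and `0`, the ratio `p̃ₖ / pₖ` at `zₖ` equals the corresponding ratio
of the second model at the coordinate `σ k` of `φ z`. By the discrepancy such a ratio is constant
on no interval, while `φ` sends the hyperplane `zₖ = c` to a set whose projection to the coordinate
`σ k` is an interval on which the ratio is constant. So the coordinate `σ k` of `φ` is a function
of `zₖ` alone, and likewise for `φ⁻¹`.

For the one source `l` without an intervention, independence takes over. The other sources
correspond to coordinates of `φ z` that are independent of the coordinate `σ l`, so conditionally
on them `zₗ ↦ φ z (σ l)` is an injective map pushing the law of `zₗ` to a fixed law. There is at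
most one increasing and one decreasing such map, and by connectedness the choice cannot depend on
the other sources.
-/

open Function ProbabilityTheory Set

variable {ι ι' κ X Y : Type*}

/-- A function that is constant on no nonempty open set, encoded as: all its fibres have empty
interior. The interventional discrepancy enters the argument as this property of the ratios
`p̃ₖ / pₖ`. -/
def IsNowhereConstant [TopologicalSpace X] (v : X → Y) : Prop :=
  ∀ c, interior (v ⁻¹' {c}) = ∅

namespace IsNowhereConstant

variable [TopologicalSpace X]

lemma comp_isOpenMap {W : Type*} [TopologicalSpace W] {v : X → Y} (hv : IsNowhereConstant v)
    {f : W → X} (hf : IsOpenMap f) : IsNowhereConstant (v ∘ f) := fun c =>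
  subset_empty_iff.1 <| hf.interior_preimage_subset_preimage_interior.trans <| by
    rw [hv c, preimage_empty]

lemma of_comp {W : Type*} [TopologicalSpace W] {v : X → Y} {f : W → X}
    (hvf : IsNowhereConstant (v ∘ f)) (hf : Continuous f) (hsurj : Surjective f) :
    IsNowhereConstant v := fun c =>
  hsurj.preimage_injective <| subset_empty_iff.1 <|
    (preimage_interior_subset_interior_preimage hf).trans (hvf c).subset

lemma subsingleton_of_mapsTo {v : ℝ → Y} (hv : IsNowhereConstant v) {s : Set ℝ}
    (hs : IsPreconnected s) {c : Y} (hsc : MapsTo v s {c}) : s.Subsingleton := by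
  by_contra hnon
  obtain ⟨a, ha, b, hb, hab⟩ := (not_subsingleton_iff.1 hnon).exists_lt
  have hIoo : Ioo a b ⊆ interior (v ⁻¹' {c}) := interior_maximal
    (fun x hx => hsc (hs.Icc_subset ha hb (Ioo_subset_Icc_self hx))) isOpen_Ioo
  rw [hv c] at hIoo
  exact (nonempty_Ioo.2 hab).not_subset_empty hIoo

-- On the hyperplane `z i = c` the image of `F` is an interval on which `v` is constant.
lemma dependsOn_singleton {v : ℝ → Y} (hv : IsNowhereConstant v) {u : ℝ → Y}
    {F : (ι → ℝ) → ℝ} (hF : Continuous F) {i : ι} (huv : ∀ z, u (z i) = v (F z)) :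
    DependsOn F {i} := by
  intro z w hzw
  have hconn : IsPreconnected {x : ι → ℝ | x i = w i} :=
    (convex_hyperplane (LinearMap.proj (R := ℝ) (φ := fun _ : ι => ℝ) i).isLinear
      (w i)).isPreconnected
  refine hv.subsingleton_of_mapsTo (hconn.image F hF.continuousOn) (c := u (w i)) ?_
    (mem_image_of_mem F (hzw i rfl)) (mem_image_of_mem F rfl)
  rintro _ ⟨x, hx, rfl⟩
  rw [mem_singleton_iff, ← huv, show x i = w i from hx]

end IsNowhereConstant

section Independence

lemma eq_comp_restrict_of_dependsOn [DecidableEq ι] {Ω : ι → Type*} {f : (∀ i, Ω i) → X}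
    {s : Finset ι} (hf : DependsOn f s) (base : ∀ i, Ω i) :
    f = (fun y => f (updateFinset base s y)) ∘ s.restrict := by
  funext z
  exact hf fun i hi => by simp [updateFinset, Finset.mem_coe.1 hi]

variable [MeasurableSpace X] [MeasurableSpace Y]

lemma indepFun_pi_of_dependsOn [Fintype ι] {Ω : ι → Type*} [∀ i, MeasurableSpace (Ω i)]
    (μ : ∀ i, Measure (Ω i)) [∀ i, IsProbabilityMeasure (μ i)]
    {f : (∀ i, Ω i) → X} {g : (∀ i, Ω i) → Y} (hf : Measurable f) (hg : Measurable g)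
    {s t : Finset ι} (hst : Disjoint s t) (hfs : DependsOn f s) (hgt : DependsOn g t) :
    IndepFun f g (Measure.pi μ) := by
  classical
  have base : ∀ i, Ω i := fun i => (nonempty_of_isProbabilityMeasure (μ i)).some
  have hcoord : iIndepFun (fun i (z : ∀ i, Ω i) => z i) (Measure.pi μ) :=
    iIndepFun_pi (X := fun _ x => x) fun _ => aemeasurable_id
  rw [eq_comp_restrict_of_dependsOn hfs base, eq_comp_restrict_of_dependsOn hgt base]
  exact (hcoord.indepFun_finset s t hst measurable_pi_apply).comp
    (hf.comp measurable_updateFinset) (hg.comp measurable_updateFinset)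

lemma indepFun_pi_eval [Fintype ι] {Ω : ι → Type*} [∀ i, MeasurableSpace (Ω i)]
    (μ : ∀ i, Measure (Ω i)) [∀ i, IsProbabilityMeasure (μ i)] {f : (∀ i, Ω i) → X}
    (hf : Measurable f) {i : ι} (hfi : DependsOn f {i}ᶜ) : IndepFun f (eval i) (Measure.pi μ) := by
  classical
  exact indepFun_pi_of_dependsOn μ hf (measurable_pi_apply i) (s := {i}ᶜ) (t := {i})
    disjoint_compl_left (by simpa using hfi) fun _ _ h => h i (by simp)

lemma indepFun_comp_of_map {Ω Ω' : Type*} [MeasurableSpace Ω] [MeasurableSpace Ω']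
    {P : Measure Ω} {φ : Ω → Ω'} (hφ : Measurable φ) {f : Ω' → X} {g : Ω' → Y}
    (hf : Measurable f) (hg : Measurable g) (h : IndepFun f g (P.map φ)) :
    IndepFun (f ∘ φ) (g ∘ φ) P := by
  rw [indepFun_iff_measure_inter_preimage_eq_mul] at h ⊢
  intro s t hs ht
  have hst := h s t hs ht
  rwa [Measure.map_apply hφ (hf hs), Measure.map_apply hφ (hg ht),
    Measure.map_apply hφ ((hf hs).inter (hg ht))] at hst

lemma map_id_prod_const_apply {Z : Type*} [MeasurableSpace Z] {β : Measure Y} [SFinite β]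
    {F : X → Y → Z} (hF : Measurable (uncurry F)) (x : X) :
    (Kernel.id ×ₖ Kernel.const X β).map (uncurry F) x = β.map (F x) := by
  rw [Kernel.map_apply _ hF, Kernel.prod_apply, Kernel.id_apply, Kernel.const_apply,
    Measure.dirac_prod, Measure.map_map hF measurable_prodMk_left]
  rfl

lemma compProd_map_id_prod_const {Z : Type*} [MeasurableSpace Z] {α : Measure X} [SFinite α]
    {β : Measure Y} [SFinite β] {F : X → Y → Z} (hF : Measurable (uncurry F)) :
    α ⊗ₘ (Kernel.id ×ₖ Kernel.const X β).map (uncurry F) =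
      (α.prod β).map fun z => (z.1, F z.1 z.2) := by
  have hG : Measurable fun z : X × Y => (z.1, F z.1 z.2) := measurable_fst.prodMk hF
  ext s hs
  rw [Measure.compProd_apply hs, Measure.map_apply hG hs, Measure.prod_apply (hG hs)]
  refine lintegral_congr fun x => ?_
  rw [map_id_prod_const_apply hF, Measure.map_apply hF.of_uncurry_left (measurable_prodMk_left hs)]
  rfl

-- Both sides are disintegrations of the law of `(R, F R S)` over the law of `R`.
lemma ae_map_eq_map_of_indepFun {Ω Z : Type*} [MeasurableSpace Ω] [MeasurableSpace Z]
    [MeasurableSpace.CountableOrCountablyGenerated X Z]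
    {P : Measure Ω} [IsProbabilityMeasure P] {R : Ω → X} {S : Ω → Y} {F : X → Y → Z}
    (hR : Measurable R) (hS : Measurable S) (hF : Measurable (uncurry F))
    (hRS : IndepFun R S P) (hRF : IndepFun R (fun ω => F (R ω) (S ω)) P) :
    ∀ᵐ ω ∂P, (P.map S).map (F (R ω)) = P.map fun ω => F (R ω) (S ω) := by
  have hT : Measurable fun ω => F (R ω) (S ω) := hF.comp (hR.prodMk hS)
  have := Measure.isProbabilityMeasure_map (μ := P) hR.aemeasurable
  have := Measure.isProbabilityMeasure_map (μ := P) hS.aemeasurable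
  have := Measure.isProbabilityMeasure_map (μ := P) hT.aemeasurable
  have : IsMarkovKernel ((Kernel.id ×ₖ Kernel.const X (P.map S)).map (uncurry F)) :=
    Kernel.IsMarkovKernel.map _ hF
  have hjoint : P.map R ⊗ₘ (Kernel.id ×ₖ Kernel.const X (P.map S)).map (uncurry F) =
      P.map R ⊗ₘ Kernel.const X (P.map fun ω => F (R ω) (S ω)) := by
    rw [compProd_map_id_prod_const hF, Measure.compProd_const,
      ← (indepFun_iff_map_prod_eq_prod_map_map hR.aemeasurable hS.aemeasurable).1 hRS,
      ← (indepFun_iff_map_prod_eq_prod_map_map hR.aemeasurable hT.aemeasurable).1 hRF,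
      Measure.map_map (by fun_prop) (hR.prodMk hS)]
    rfl
  filter_upwards [ae_of_ae_map hR.aemeasurable (Kernel.ae_eq_of_compProd_eq hjoint)] with ω hω
  rw [← map_id_prod_const_apply hF, hω, Kernel.const_apply]

end Independence

section FibreLaws

lemma strictMono_measure_Iic (β : Measure ℝ) [IsFiniteMeasure β] [β.IsOpenPosMeasure] :
    StrictMono fun b => β (Iic b) := by
  intro a b hab
  have hIoc : 0 < β (Ioc a b) :=
    (isOpen_Ioo.measure_pos β (nonempty_Ioo.2 hab)).trans_le (measure_mono Ioo_subset_Ioc_self)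
  calc β (Iic a) < β (Iic a) + β (Ioc a b) :=
        ENNReal.lt_add_right (measure_ne_top β _) hIoc.ne'
    _ = β (Iic b) := by
        rw [← measure_union (Iic_disjoint_Ioc le_rfl) measurableSet_Ioc,
          Iic_union_Ioc_eq_Iic hab.le]

lemma map_Iic_mem_of_injective (α : Measure ℝ) {h : ℝ → ℝ} (hc : Continuous h)
    (hinj : Injective h) (t : ℝ) : α.map h (Iic (h t)) ∈ ({α (Iic t), α (Ici t)} : Set _) := by
  rw [Measure.map_apply hc.measurable measurableSet_Iic]
  rcases hc.strictMono_of_inj hinj with hmono | hanti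
  · exact .inl <| congrArg α <| Set.ext fun _ => hmono.le_iff_le
  · exact .inr <| congrArg α <| Set.ext fun _ => hanti.le_iff_ge

-- For `x` in a dense set, `F x t` is one of the at most two points `b` with
-- `β (Iic b) ∈ {α (Iic t), α (Ici t)}`. That `x ↦ F x t` then takes a single value follows from
-- connectedness alone, so `F x` and `F y` need not be known to have the same orientation.
lemma eq_of_ae_map_eq [TopologicalSpace X] [PreconnectedSpace X] [MeasurableSpace X]
    (μ : Measure X) [μ.IsOpenPosMeasure] {α β : Measure ℝ} [IsFiniteMeasure β]
    [β.IsOpenPosMeasure] {F : X → ℝ → ℝ} (hX : ∀ t, Continuous fun x => F x t)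
    (hF : ∀ x, Continuous (F x)) (hinj : ∀ x, Injective (F x))
    (hlaw : ∀ᵐ x ∂μ, α.map (F x) = β) (x y : X) : F x = F y := by
  funext t
  let values : Set ℝ := (fun b => β (Iic b)) ⁻¹' {α (Iic t), α (Ici t)}
  have hfin : values.Finite :=
    (toFinite _).preimage (strictMono_measure_Iic β).injective.injOn
  have hdense : Dense {x | F x t ∈ values} := Measure.dense_of_ae <| by
    filter_upwards [hlaw] with x hx
    have hcdf := map_Iic_mem_of_injective α (hF x) (hinj x) t
    rwa [hx] at hcdf
  have hmem (x : X) : F x t ∈ values :=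
    (hfin.isClosed.preimage (hX t)).closure_subset (hdense x)
  exact hfin.countable.isTotallyDisconnected _ (range_subset_iff.2 hmem)
    (isPreconnected_range (hX t)) (mem_range_self x) (mem_range_self y)

end FibreLaws

section Coordinates

lemma dependsOn_update_of_forall_ne [DecidableEq ι] {Ω : ι' → Type*} {E : ι → Type*}
    {H : (∀ j, Ω j) → ∀ i, E i} {l : ι} {s : Set ι'}
    (hH : ∀ i ≠ l, DependsOn (fun w => H w i) s) (c : E l) :
    DependsOn (fun w => update (H w) l c) s := by
  intro w w' hw
  funext i
  rcases eq_or_ne i l with rfl | hi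
  · simp
  · simpa [hi] using hH i hi hw

lemma symm_dependsOn_singleton {A : ι → Type*} {B : ι' → Type*}
    (φ : (∀ i, A i) ≃ (∀ j, B j)) (σ : ι ≃ ι')
    (hdep : ∀ i, DependsOn (fun z => φ z (σ i)) {i}) (i : ι) :
    DependsOn (fun w => φ.symm w i) {σ i} := by
  classical
  have hcoord {z z' : ∀ i, A i} (h : φ z (σ i) = φ z' (σ i)) : z i = z' i := by
    suffices update z i (z' i) = z by simpa using (congrFun this i).symm
    refine φ.injective (funext fun j => ?_)
    obtain ⟨i', rfl⟩ := σ.surjective j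
    rcases eq_or_ne i' i with rfl | hi
    · exact (hdep i' (by simp)).trans h.symm
    · exact hdep i' (by simp [hi])
  intro w w' hw
  exact hcoord (by simpa using hw)

-- Conditionally on the sources `z i`, `i ≠ l`, the law of `φ z l'` is still `ν l'`, because those
-- sources are functions of the coordinates `j ≠ l'` of `φ z`.
lemma ae_map_update_eq [Fintype ι] [DecidableEq ι] [Fintype ι']
    {μ : ι → Measure ℝ} {ν : ι' → Measure ℝ}
    [∀ i, IsProbabilityMeasure (μ i)] [∀ j, IsProbabilityMeasure (ν j)]
    {φ : (ι → ℝ) ≃ₜ (ι' → ℝ)} (hφ : (Measure.pi μ).map φ = Measure.pi ν) {l : ι} {l' : ι'}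
    (hsymm : ∀ i ≠ l, DependsOn (fun w => φ.symm w i) {l'}ᶜ) :
    ∀ᵐ z ∂Measure.pi μ, (μ l).map (fun t => φ (update z l t) l') = ν l' := by
  let others : (ι → ℝ) → ι → ℝ := fun z => update z l 0
  have hothers : Measurable others := (continuous_id.update l continuous_const).measurable
  let F : (ι → ℝ) → ℝ → ℝ := fun x t => φ (update x l t) l'
  have hF : Measurable (uncurry F) := ((continuous_apply l').comp
    (φ.continuous.comp (continuous_fst.update l continuous_snd))).measurable
  have hF_others (z : ι → ℝ) (t : ℝ) : F (others z) t = φ (update z l t) l' := by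
    simp [F, others]
  have hF_self (z : ι → ℝ) : F (others z) (z l) = φ z l' := by simp [hF_others]
  have hsource : IndepFun others (eval l) (Measure.pi μ) :=
    indepFun_pi_eval μ hothers <|
      dependsOn_update_of_forall_ne (H := id) (fun i hi _ _ h => h i hi) 0
  have htarget : IndepFun others (fun z => F (others z) (z l)) (Measure.pi μ) := by
    have := indepFun_comp_of_map φ.measurable (hothers.comp φ.symm.measurable)
      (measurable_pi_apply l') <| hφ ▸ indepFun_pi_eval ν (hothers.comp φ.symm.measurable)
        (dependsOn_update_of_forall_ne hsymm 0)
    simpa [comp_def, hF_self] using this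
  filter_upwards [ae_map_eq_map_of_indepFun hothers (measurable_pi_apply l) hF hsource htarget]
    with z hz
  calc (μ l).map (fun t => φ (update z l t) l')
      = ((Measure.pi μ).map (eval l)).map (F (others z)) := by
        rw [(measurePreserving_eval μ l).map_eq, funext (hF_others z)]
    _ = (Measure.pi μ).map (eval l' ∘ φ) := by rw [hz, funext hF_self]; rfl
    _ = ν l' := by
        rw [← Measure.map_map (measurable_pi_apply l') φ.measurable, hφ,
          (measurePreserving_eval ν l').map_eq]

lemma dependsOn_singleton_of_forall_ne [Fintype ι] [Fintype ι']
    {μ : ι → Measure ℝ} {ν : ι' → Measure ℝ}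
    [∀ i, IsProbabilityMeasure (μ i)] [∀ i, (μ i).IsOpenPosMeasure]
    [∀ j, IsProbabilityMeasure (ν j)] [∀ j, (ν j).IsOpenPosMeasure]
    {φ : (ι → ℝ) ≃ₜ (ι' → ℝ)} (hφ : (Measure.pi μ).map φ = Measure.pi ν) {l : ι} {l' : ι'}
    (hdep : ∀ j ≠ l', DependsOn (fun z => φ z j) {l}ᶜ)
    (hsymm : ∀ i ≠ l, DependsOn (fun w => φ.symm w i) {l'}ᶜ) :
    DependsOn (fun z => φ z l') {l} := by
  classical
  have hcont : Continuous fun x : (ι → ℝ) × ℝ => φ (update x.1 l x.2) l' :=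
    (continuous_apply l').comp (φ.continuous.comp (continuous_fst.update l continuous_snd))
  have hinj (z : ι → ℝ) : Injective fun t => φ (update z l t) l' := by
    intro s t hst
    refine update_injective z l (φ.injective (funext fun j => ?_))
    rcases eq_or_ne j l' with rfl | hj
    · exact hst
    · exact hdep j hj fun i hi => by rw [update_of_ne hi, update_of_ne hi]
  have hfibre := eq_of_ae_map_eq (Measure.pi μ) (F := fun z t => φ (update z l t) l')
    (fun t => hcont.comp (.prodMk_left t)) (fun z => hcont.comp (.prodMk_right z)) hinj
    (ae_map_update_eq hφ hsymm)
  intro z w hzw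
  calc φ z l' = φ (update z l (z l)) l' := by rw [update_eq_self]
    _ = φ (update w l (z l)) l' := congrFun (hfibre z w) (z l)
    _ = φ w l' := by rw [hzw l rfl, update_eq_self]

end Coordinates

section Ratios

lemma eq_comp_of_map_withDensity_eq [TopologicalSpace X] [MeasurableSpace X] [BorelSpace X]
    [TopologicalSpace Y] [MeasurableSpace Y] [BorelSpace Y] {P : Measure X} {Q : Measure Y}
    [P.IsOpenPosMeasure] [SigmaFinite P] {φ : X ≃ₜ Y} (hφ : P.map φ = Q) {u : X → ℝ} {v : Y → ℝ}
    (hu : Continuous u) (hv : Continuous v) (hu0 : ∀ x, 0 ≤ u x) (hv0 : ∀ y, 0 ≤ v y)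
    (huv : (P.withDensity fun x => ENNReal.ofReal (u x)).map φ =
      Q.withDensity fun y => ENNReal.ofReal (v y)) :
    u = v ∘ φ := by
  have hvφ := hv.comp φ.continuous
  have hpull : (P.withDensity fun x => ENNReal.ofReal (u x)) =
      P.withDensity fun x => ENNReal.ofReal ((v ∘ φ) x) := by
    refine φ.toMeasurableEquiv.map_measurableEquiv_injective ?_
    refine Eq.trans huv (Measure.ext fun s hs => ?_)
    rw [Homeomorph.toMeasurableEquiv_coe, Measure.map_apply φ.measurable hs,
      withDensity_apply _ hs, withDensity_apply _ (φ.measurable hs), ← hφ,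
      setLIntegral_map hs hv.measurable.ennreal_ofReal φ.measurable]
    rfl
  refine (hu.ae_eq_iff_eq P hvφ).1 ?_
  filter_upwards [(withDensity_eq_iff_of_sigmaFinite hu.measurable.ennreal_ofReal.aemeasurable
    hvφ.measurable.ennreal_ofReal.aemeasurable).1 hpull] with x hx
  exact (ENNReal.ofReal_eq_ofReal_iff (hu0 x) (hv0 _)).1 hx

end Ratios

section ProductModels

lemma dependsOn_singleton_of_map_withDensity_eq [Fintype ι] [Fintype ι']
    {μ : ι → Measure ℝ} {ν : ι' → Measure ℝ}
    [∀ i, IsProbabilityMeasure (μ i)] [∀ i, (μ i).IsOpenPosMeasure]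
    [∀ j, IsProbabilityMeasure (ν j)] [∀ j, (ν j).IsOpenPosMeasure]
    {φ : (ι → ℝ) ≃ₜ (ι' → ℝ)} (hφ : (Measure.pi μ).map φ = Measure.pi ν) (σ : ι ≃ ι')
    {l : ι} {target : κ → ι} (htarget : ∀ i ≠ l, i ∈ range target)
    {u v : κ → ℝ → ℝ} (hu : ∀ k, Continuous (u k)) (hv : ∀ k, Continuous (v k))
    (hu0 : ∀ k t, 0 ≤ u k t) (hv0 : ∀ k t, 0 ≤ v k t) (hnc : ∀ k, IsNowhereConstant (u k))
    (huv : ∀ k,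
      ((Measure.pi μ).withDensity fun z => ENNReal.ofReal (u k (z (target k)))).map φ =
        (Measure.pi ν).withDensity fun w => ENNReal.ofReal (v k (w (σ (target k))))) (i : ι) :
    DependsOn (fun z => φ z (σ i)) {i} := by
  have hratio (k : κ) (z : ι → ℝ) : u k (z (target k)) = v k (φ z (σ (target k))) :=
    congrFun (eq_comp_of_map_withDensity_eq hφ ((hu k).comp (continuous_apply _))
      ((hv k).comp (continuous_apply _)) (fun _ => hu0 k _) (fun _ => hv0 k _) (huv k)) z
  have hnc' (k : κ) : IsNowhereConstant (v k) := by
    have hcomp : u k ∘ eval (target k) = v k ∘ eval (σ (target k)) ∘ φ := funext (hratio k)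
    exact .of_comp (hcomp ▸ (hnc k).comp_isOpenMap (isOpenMap_eval _))
      ((continuous_apply _).comp φ.continuous) ((surjective_eval _).comp φ.surjective)
  have hφdep (i : ι) (hi : i ≠ l) : DependsOn (fun z => φ z (σ i)) {i} := by
    obtain ⟨k, rfl⟩ := htarget i hi
    exact (hnc' k).dependsOn_singleton ((continuous_apply _).comp φ.continuous) (hratio k)
  have hψdep (i : ι) (hi : i ≠ l) : DependsOn (fun w => φ.symm w i) {σ i} := by
    obtain ⟨k, rfl⟩ := htarget i hi
    exact (hnc k).dependsOn_singleton (u := v k) ((continuous_apply _).comp φ.symm.continuous)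
      fun w => by simp [hratio k]
  rcases eq_or_ne i l with rfl | hi
  · refine dependsOn_singleton_of_forall_ne hφ (fun j hj => ?_) fun i' hi' => ?_
    · obtain ⟨i', rfl⟩ := σ.surjective j
      have hi' : i' ≠ i := ne_of_apply_ne σ hj
      exact (hφdep i' hi').mono (by simpa using hi'.symm)
    · exact (hψdep i' hi').mono (by simpa using hi'.symm)
  · exact hφdep i hi

end ProductModels

section Densities

/-- A strictly positive continuous probability density on `ℝ` with respect to Lebesgue measure;
the continuous counterpart of `IsC1Density`. -/
structure IsPosDensity (r : ℝ → ℝ) : Prop where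
  pos : ∀ t, 0 < r t
  continuous : Continuous r
  integral_eq_one : ∫ t, r t = 1

lemma IsC1Density.isPosDensity {r : ℝ → ℝ} (hr : IsC1Density r) : IsPosDensity r :=
  ⟨hr.1, hr.2.1.continuous, hr.2.2⟩

namespace IsPosDensity

variable {r : ℝ → ℝ}

lemma integrable (hr : IsPosDensity r) : Integrable r :=
  .of_integral_ne_zero (by simp [hr.integral_eq_one])

lemma isProbabilityMeasure (hr : IsPosDensity r) :
    IsProbabilityMeasure (densityMeasure₁ r) where
  measure_univ := by
    rw [densityMeasure₁, withDensity_apply _ .univ, setLIntegral_univ,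
      ← ofReal_integral_eq_lintegral_ofReal hr.integrable (.of_forall fun t => (hr.pos t).le),
      hr.integral_eq_one, ENNReal.ofReal_one]

lemma isOpenPosMeasure (hr : IsPosDensity r) : (densityMeasure₁ r).IsOpenPosMeasure :=
  (withDensity_absolutelyContinuous' hr.continuous.measurable.ennreal_ofReal.aemeasurable
    (.of_forall fun t => (ENNReal.ofReal_pos.2 (hr.pos t)).ne')).isOpenPosMeasure

end IsPosDensity

variable {d : ℕ}

lemma densityMeasure_prod_eq_pi {p : Fin d → ℝ → ℝ} (hp : ∀ i, Integrable (p i))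
    (hp0 : ∀ i t, 0 ≤ p i t) :
    densityMeasure (fun z => ∏ i, p i (z i)) = Measure.pi fun i => densityMeasure₁ (p i) := by
  have (i : Fin d) : IsFiniteMeasure (densityMeasure₁ (p i)) :=
    isFiniteMeasure_withDensity_ofReal (hp i).2
  refine (Measure.pi_eq fun s hs => ?_).symm
  simp only [densityMeasure, densityMeasure₁, withDensity_apply _ (MeasurableSet.univ_pi hs),
    withDensity_apply _ (hs _), volume_pi, Measure.restrict_pi_pi]
  rw [← ofReal_integral_eq_lintegral_ofReal
      (Integrable.fintype_prod_dep fun i => (hp i).restrict)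
      (.of_forall fun z => Finset.prod_nonneg fun i _ => hp0 i (z i)),
    integral_fintype_prod_eq_prod, ENNReal.ofReal_prod_of_nonneg fun i _ =>
      integral_nonneg (hp0 i)]
  exact Finset.prod_congr rfl fun i _ =>
    ofReal_integral_eq_lintegral_ofReal (hp i).restrict (.of_forall (hp0 i))

lemma densityMeasure_intervention {p : Fin d → ℝ → ℝ} {s : ℝ → ℝ} (hp : ∀ i, Continuous (p i))
    (hp0 : ∀ i t, 0 < p i t) (hs : Continuous s) (j : Fin d) :
    densityMeasure (fun z => s (z j) * ∏ i ∈ ({j} : Finset (Fin d))ᶜ, p i (z i)) =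
      (densityMeasure fun z => ∏ i, p i (z i)).withDensity
        fun z => ENNReal.ofReal (s (z j) / p j (z j)) := by
  have hprod : Continuous fun z : Fin d → ℝ => ∏ i, p i (z i) :=
    continuous_finsetProd _ fun i _ => (hp i).comp (continuous_apply i)
  have hratio : Continuous fun z : Fin d → ℝ => s (z j) / p j (z j) :=
    (hs.div (hp j) fun t => (hp0 j t).ne').comp (continuous_apply j)
  rw [densityMeasure, densityMeasure, ← withDensity_mul _ hprod.measurable.ennreal_ofReal
    hratio.measurable.ennreal_ofReal]
  congr 1
  funext z
  rw [Pi.mul_apply, ← ENNReal.ofReal_mul (Finset.prod_nonneg fun i _ => (hp0 i _).le),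
    Fintype.prod_eq_mul_prod_compl j]
  have := (hp0 j (z j)).ne'
  congr 1
  field_simp

end Densities

section Discrepancy

lemma isNowhereConstant_div_of_dense {r s : ℝ → ℝ} (hr : ∀ t, r t ≠ 0) (hs : ∀ t, s t ≠ 0)
    (hrs : Dense {t | deriv (fun x => Real.log (r x)) t ≠ deriv (fun x => Real.log (s x)) t}) :
    IsNowhereConstant fun t => s t / r t := by
  intro c
  by_contra hne
  obtain ⟨t, ht, htc⟩ := hrs.inter_open_nonempty _ isOpen_interior (nonempty_iff_ne_empty.2 hne)
  refine htc ?_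
  have hlog : (fun x => Real.log (s x)) =ᶠ[nhds t] fun x => Real.log c + Real.log (r x) := by
    filter_upwards [isOpen_interior.mem_nhds ht] with x hx
    have hxc : s x / r x = c := mem_preimage.1 (interior_subset hx)
    rw [← hxc, Real.log_div (hs x) (hr x), sub_add_cancel]
  rw [hlog.deriv_eq, deriv_const_add]

lemma dense_of_ae_eval_mem [Fintype ι] [MeasureSpace X] [TopologicalSpace X] [Nonempty X]
    [(volume : Measure (ι → X)).IsOpenPosMeasure] {i : ι} {s : Set X}
    (h : ∀ᵐ z : ι → X, z i ∈ s) : Dense s :=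
  ((surjective_eval i).denseRange.dense_image (continuous_apply i)
    (Measure.dense_of_ae h)).mono (image_subset_iff.2 fun _ hz => hz)

end Discrepancy

section Diffeomorphisms

lemma IsC1Diffeo.comp {E F G : Type*} [NormedAddCommGroup E] [NormedSpace ℝ E]
    [NormedAddCommGroup F] [NormedSpace ℝ F] [NormedAddCommGroup G] [NormedSpace ℝ G]
    {g : F → G} {f : E → F} (hg : IsC1Diffeo g) (hf : IsC1Diffeo f) : IsC1Diffeo (g ∘ f) := by
  obtain ⟨hgC1, g', hg'C1, hgl, hgr⟩ := hg
  obtain ⟨hfC1, f', hf'C1, hfl, hfr⟩ := hf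
  exact ⟨hgC1.comp hfC1, f' ∘ g', hf'C1.comp hg'C1, hgl.comp hfl, hgr.comp hfr⟩

lemma IsC1Diffeo.exists_homeomorph {E F : Type*} [NormedAddCommGroup E] [NormedSpace ℝ E]
    [NormedAddCommGroup F] [NormedSpace ℝ F] {f : E → F} (hf : IsC1Diffeo f) :
    ∃ φ : E ≃ₜ F, ⇑φ = f ∧ ContDiff ℝ 1 φ.symm := by
  obtain ⟨hfC1, g, hgC1, hl, hr⟩ := hf
  exact ⟨⟨⟨f, g, hl, hr⟩, hfC1.continuous, hgC1.continuous⟩, rfl, hgC1⟩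

lemma inSReparam_of_dependsOn {d : ℕ} {φ : (Fin d → ℝ) ≃ₜ (Fin d → ℝ)} (hφ : ContDiff ℝ 1 φ)
    (hφsymm : ContDiff ℝ 1 φ.symm) (σ : Equiv.Perm (Fin d))
    (hdep : ∀ i, DependsOn (fun z => φ z (σ i)) {i}) : InSReparam φ := by
  have hconst : ContDiff ℝ 1 fun (t : ℝ) (_ : Fin d) => t := contDiff_pi.2 fun _ => contDiff_id
  refine ⟨σ.symm, fun i t => φ (fun _ => t) (σ i), fun i => ⟨?_, ?_⟩, fun z j => ?_⟩
  · exact (contDiff_apply ℝ ℝ (σ i)).comp (hφ.comp hconst)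
  · refine ⟨fun s => φ.symm (fun _ => s) i,
      (contDiff_apply ℝ ℝ i).comp (hφsymm.comp hconst), fun t => ?_, fun s => ?_⟩
    · calc φ.symm (fun _ => φ (fun _ => t) (σ i)) i = φ.symm (φ fun _ => t) i :=
            symm_dependsOn_singleton φ.toEquiv σ hdep i (by simp)
        _ = t := by rw [φ.symm_apply_apply]
    · calc φ (fun _ => φ.symm (fun _ => s) i) (σ i) = φ (φ.symm fun _ => s) (σ i) :=
            hdep i (by simp)
        _ = s := by rw [φ.apply_symm_apply]
  · obtain ⟨i, rfl⟩ := σ.surjective j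
    simpa using hdep i (x := z) (y := fun _ => z i) (by simp)

lemma map_comp_eq_of_map_eq_map [MeasurableSpace X] [MeasurableSpace Y] {Z : Type*}
    [MeasurableSpace Z] {P : Measure X} {Q : Measure Z} {f : X → Y} {f' : Z → Y} {g' : Y → Z}
    (hf : Measurable f) (hf' : Measurable f') (hg' : Measurable g') (hinv : LeftInverse g' f')
    (h : P.map f = Q.map f') : P.map (g' ∘ f) = Q := by
  rw [← Measure.map_map hg' hf, h, Measure.map_map hg' hf', hinv.comp_eq_id, Measure.map_id]

end Diffeomorphisms

theorem ica_matched_targets_identifiability_reparam_general {d : ℕ} (σ : Equiv.Perm (Fin d))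
    (l : Fin d) (target : κ → Fin d) (htarget : ∀ i ≠ l, i ∈ range target)
    (p q : Fin d → ℝ → ℝ) (hp : ∀ i, IsPosDensity (p i)) (hq : ∀ i, IsPosDensity (q i))
    (pt qt : κ → ℝ → ℝ) (hpt : ∀ k, Continuous (pt k)) (hqt : ∀ k, Continuous (qt k))
    (hpt0 : ∀ k t, 0 ≤ pt k t) (hqt0 : ∀ k t, 0 ≤ qt k t)
    (hratio : ∀ k, IsNowhereConstant fun t => pt k t / p (target k) t)
    (f f' g' : (Fin d → ℝ) → (Fin d → ℝ)) (hf : IsC1Diffeo f) (hf' : ContDiff ℝ 1 f')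
    (hg' : ContDiff ℝ 1 g') (hinv₁ : LeftInverse g' f') (hinv₂ : RightInverse g' f')
    (hmatch0 : Measure.map f (densityMeasure fun z => ∏ i, p i (z i)) =
        Measure.map f' (densityMeasure fun z => ∏ i, q i (z i)))
    (hmatch : ∀ k,
        Measure.map f (densityMeasure fun z =>
            pt k (z (target k)) * ∏ i ∈ ({target k} : Finset (Fin d))ᶜ, p i (z i)) =
        Measure.map f' (densityMeasure fun z =>
            qt k (z (σ (target k))) * ∏ i ∈ ({σ (target k)} : Finset (Fin d))ᶜ, q i (z i))) :
    InSReparam (g' ∘ f) := by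
  have hgf : IsC1Diffeo (g' ∘ f) := .comp ⟨hg', f', hf', hinv₂, hinv₁⟩ hf
  obtain ⟨φ, hφ, hφsymm⟩ := hgf.exists_homeomorph
  have hmap {P Q : Measure (Fin d → ℝ)} (h : P.map f = Q.map f') : P.map φ = Q :=
    hφ ▸ map_comp_eq_of_map_eq_map hf.1.continuous.measurable hf'.continuous.measurable
      hg'.continuous.measurable hinv₁ h
  have := fun i => (hp i).isProbabilityMeasure
  have := fun i => (hp i).isOpenPosMeasure
  have := fun i => (hq i).isProbabilityMeasure
  have := fun i => (hq i).isOpenPosMeasure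
  simp_rw [densityMeasure_intervention (fun i => (hp i).continuous) (fun i => (hp i).pos) (hpt _),
    densityMeasure_intervention (fun i => (hq i).continuous) (fun i => (hq i).pos) (hqt _),
    densityMeasure_prod_eq_pi (fun i => (hp i).integrable) fun i t => ((hp i).pos t).le,
    densityMeasure_prod_eq_pi (fun i => (hq i).integrable) fun i t => ((hq i).pos t).le]
    at hmatch0 hmatch
  rw [← hφ]
  exact inSReparam_of_dependsOn (hφ ▸ hgf.1) hφsymm σ <|
    dependsOn_singleton_of_map_withDensity_eq (hmap hmatch0) σ htarget
      (u := fun k t => pt k t / p (target k) t) (v := fun k t => qt k t / q (σ (target k)) t)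
      (fun k => (hpt k).div (hp _).continuous fun t => ((hp _).pos t).ne')
      (fun k => (hqt k).div (hq _).continuous fun t => ((hq _).pos t).ne')
      (fun k t => div_nonneg (hpt0 k t) ((hp _).pos t).le)
      (fun k t => div_nonneg (hqt0 k t) ((hq _).pos t).le)
      hratio fun k => hmap (hmatch k)

/-- **Proposition (nonlinear ICA with matched intervention targets).** (Here the dimension is
`d = m + 1 ≥ 1`; the first model's targets are the first `d − 1` variables `k.castSucc` for
`k : Fin m`, and the second model's targets are `σ (k.castSucc)` for an unknown permutation
`σ` of `[d]`.) The latent graph is empty; assume the general interventional discrepancy: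
for every `k` and every `i`, a.e. `z`, `(log p i)′ (z i) ≠ (log pt k)′ (z k.castSucc)`, and
likewise `(log q i)′ (z i) ≠ (log qt k)′ (z (σ k.castSucc))`. If `f`, `f′` are C¹
diffeomorphisms with matching pushforwards in all regimes, then `f′⁻¹ ∘ f ∈ S_reparam`. -/
theorem ica_matched_targets_identifiability_reparam {m : ℕ}
    (σ : Equiv.Perm (Fin (m + 1)))
    (p q : Fin (m + 1) → ℝ → ℝ)
    (hp : ∀ i, IsC1Density (p i)) (hq : ∀ i, IsC1Density (q i))
    (pt qt : Fin m → ℝ → ℝ)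
    (hpt : ∀ k, IsC1Density (pt k)) (hqt : ∀ k, IsC1Density (qt k))
    (hdiscp : ∀ (k : Fin m) (i : Fin (m + 1)), ∀ᵐ (z : Fin (m + 1) → ℝ) ∂volume,
        deriv (fun t => Real.log (p i t)) (z i) ≠
          deriv (fun t => Real.log (pt k t)) (z k.castSucc))
    (hdiscq : ∀ (k : Fin m) (i : Fin (m + 1)), ∀ᵐ (z : Fin (m + 1) → ℝ) ∂volume,
        deriv (fun t => Real.log (q i t)) (z i) ≠
          deriv (fun t => Real.log (qt k t)) (z (σ k.castSucc)))
    (f f' g' : (Fin (m + 1) → ℝ) → (Fin (m + 1) → ℝ))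
    (hf : IsC1Diffeo f) (hf' : ContDiff ℝ 1 f') (hg' : ContDiff ℝ 1 g')
    (hinv₁ : Function.LeftInverse g' f') (hinv₂ : Function.RightInverse g' f')
    (hmatch0 : Measure.map f (densityMeasure fun z => ∏ i, p i (z i)) =
        Measure.map f' (densityMeasure fun z => ∏ i, q i (z i)))
    (hmatch : ∀ k : Fin m,
        Measure.map f (densityMeasure fun z =>
            pt k (z k.castSucc) *
              ∏ i ∈ ({k.castSucc} : Finset (Fin (m + 1)))ᶜ, p i (z i)) =
        Measure.map f' (densityMeasure fun z =>
            qt k (z (σ k.castSucc)) *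
              ∏ i ∈ ({σ k.castSucc} : Finset (Fin (m + 1)))ᶜ, q i (z i))) :
    InSReparam (g' ∘ f) := by
  have hratio (k : Fin m) : IsNowhereConstant fun t => pt k t / p k.castSucc t :=
    isNowhereConstant_div_of_dense (fun t => ((hp _).1 t).ne') (fun t => ((hpt k).1 t).ne')
      (dense_of_ae_eval_mem (hdiscp k k.castSucc))
  exact ica_matched_targets_identifiability_reparam_general σ (Fin.last m) Fin.castSucc
    (fun _ hi => Fin.exists_castSucc_eq.2 hi) p q (fun i => (hp i).isPosDensity)
    (fun i => (hq i).isPosDensity) pt qt (fun k => (hpt k).2.1.continuous)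
    (fun k => (hqt k).2.1.continuous) (fun k t => ((hpt k).1 t).le) (fun k t => ((hqt k).1 t).le)
    hratio f f' g' hf hf' hg' hinv₁ hinv₂ hmatch0 hmatch
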